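/- Let q ≥ 2 and π be a permutation of {0,…,q−1}, and let D = {x ∈ [0,1) : x = F_π^k(d) for some d ∈ D₀ and k ≥ 0, or F_π^k(x) ∈ D₀ for some k ≥ 0} be the union of the forward and backward F_π-orbits of the discontinuity set D₀. Then D is dense in the set I_np of non-periodic points: for all real numbers u < v, if the open interval (u,v) meets I_np, then (u,v) contains a point of D. -/

import Mathlib

open Classical in
/-- The von Neumann–Kakutani map `a : [0,1) → [0,1)`:
for `x ∈ [1 - 2^{1-n}, 1 - 2^{-n})`, `n ≥ 1`, `a x = x - 1 + 2^{1-n} + 2^{-n} = x - 1 + 3·2^{-n}`.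
Here `Nat.find h` is the least `n` with `x < 1 - 2^{-n}`, which for `x ∈ [0,1)` is exactly
the unique `n ≥ 1` with `1 - 2^{1-n} ≤ x < 1 - 2^{-n}`. -/
noncomputable def vnk (x : ℝ) : ℝ :=
  if h : ∃ n : ℕ, x < 1 - (2 : ℝ)⁻¹ ^ n then
    x - 1 + 3 * (2 : ℝ)⁻¹ ^ (Nat.find h)
  else 0

open Classical in
/-- The finite interval exchange `R_π : [0,1) → [0,1)` determined by a permutation `π` of
`{0,…,q-1}`: `R_π x = x + (π i - i)/q` for `x ∈ [i/q, (i+1)/q)`. -/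
noncomputable def rotPerm (q : ℕ) (π : Equiv.Perm (Fin q)) (x : ℝ) : ℝ :=
  if h : ∃ i : Fin q, x ∈ Set.Ico (((i : ℕ) : ℝ) / q) ((((i : ℕ) : ℝ) + 1) / q) then
    x + ((((π h.choose : Fin q) : ℕ) : ℝ) - (((h.choose : Fin q) : ℕ) : ℝ)) / q
  else x

/-- The rotated odometer `F_π = a ∘ R_π`. -/
noncomputable def rotOdo (q : ℕ) (π : Equiv.Perm (Fin q)) (x : ℝ) : ℝ :=
  vnk (rotPerm q π x)

/-- The set of periodic points of the rotated odometer in `[0,1)`. -/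
noncomputable def Iper (q : ℕ) (π : Equiv.Perm (Fin q)) : Set ℝ :=
  {x ∈ Set.Ico (0 : ℝ) 1 | ∃ n : ℕ, 1 ≤ n ∧ (rotOdo q π)^[n] x = x}

/-- The set of non-periodic points of the rotated odometer in `[0,1)`. -/
noncomputable def Inp (q : ℕ) (π : Equiv.Perm (Fin q)) : Set ℝ :=
  Set.Ico (0 : ℝ) 1 \ Iper q π

/-- The set `D₀ = {R_π⁻¹(1 - 2^{-n}) : n ≥ 0}` of discontinuity points of `F_π`. -/
noncomputable def D0set (q : ℕ) (π : Equiv.Perm (Fin q)) : Set ℝ :=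
  {x ∈ Set.Ico (0 : ℝ) 1 | ∃ n : ℕ, rotPerm q π x = 1 - (2 : ℝ)⁻¹ ^ n}

/-- The union `D` of the forward and backward `F_π`-orbits of `D₀`. -/
noncomputable def Dset (q : ℕ) (π : Equiv.Perm (Fin q)) : Set ℝ :=
  {x ∈ Set.Ico (0 : ℝ) 1 |
    (∃ d ∈ D0set q π, ∃ k : ℕ, x = (rotOdo q π)^[k] d) ∨
    (∃ k : ℕ, (rotOdo q π)^[k] x ∈ D0set q π)}

/-
Let `U` be the complement of `D` in `[0,1)`; it is mapped injectively into itself. A half-open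
interval in `U` that stays inside one cell of the `q`-grid meets no discontinuity, so `F_π`
translates it, and if its length is at least `r` then the translation is by a multiple of
`1 / (q 2^N)`, where `2^{-N} < r`. A grid point need not belong to `D`, so a long interval may have
to be cut there. But a grid point in the interior of `U` has a whole neighbourhood in `U`; as there
are finitely many grid points, for small `r` the piece around a given point can be lengthened back
to `r` inside its cell. Hence the orbit of a point with an interval of length `r` in `U` stays in
the intersection of `[0,1)` with a translate of a lattice, which is finite, and by injectivity the
point is periodic.
-/

open Set Filter Function Topology

theorem injOn_iUnion_of_pairwise_disjoint {α β ι : Type*} {f : α → β} {A : ι → Set α}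
    {B : ι → Set β} (hB : Pairwise (Disjoint on B)) (hmaps : ∀ i, MapsTo f (A i) (B i))
    (hinj : ∀ i, InjOn f (A i)) : InjOn f (⋃ i, A i) := by
  intro x hx y hy hxy
  obtain ⟨i, hxi⟩ := mem_iUnion.1 hx
  obtain ⟨j, hyj⟩ := mem_iUnion.1 hy
  obtain rfl : i = j := by
    by_contra hij
    exact disjoint_left.1 (hB hij) (hmaps i hxi) (hxy ▸ hmaps j hyj)
  exact hinj i hxi hyj hxy

theorem mem_periodicPts_of_finite_of_injOn {α : Type*} {f : α → α} {T : Set α} {x : α}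
    (hT : T.Finite) (hmaps : MapsTo f T T) (hinj : InjOn f T) (hx : x ∈ T) :
    x ∈ periodicPts f := by
  have : Finite T := hT
  have hsemi : Semiconj Subtype.val (hmaps.restrict f T T) f := fun _ => rfl
  exact hsemi.mapsTo_periodicPts
    ((hmaps.restrict_inj.2 hinj).mem_periodicPts (⟨x, hx⟩ : T))

theorem finite_inter_range_add_intCast_mul {U : Set ℝ} (hU : Bornology.IsBounded U) {δ : ℝ}
    (hδ : 0 < δ) (x : ℝ) : (U ∩ range fun m : ℤ => x + m * δ).Finite := by
  obtain ⟨a, ha⟩ := hU.bddBelow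
  obtain ⟨b, hb⟩ := hU.bddAbove
  refine ((finite_Icc ⌈(a - x) / δ⌉ ⌊(b - x) / δ⌋).image fun m : ℤ => x + m * δ).subset ?_
  rintro _ ⟨hm, m, rfl⟩
  refine ⟨m, ⟨Int.ceil_le.2 ?_, Int.le_floor.2 ?_⟩, rfl⟩
  · rw [div_le_iff₀ hδ]
    linarith [ha hm]
  · rw [le_div_iff₀ hδ]
    linarith [hb hm]

/-- The point `y` lies in a half-open interval of length at least `r` contained in `U`. The interval
is half-open because interval exchanges permute half-open intervals. -/
def MemLongIco (U : Set ℝ) (r y : ℝ) : Prop :=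
  ∃ s t : ℝ, y ∈ Ico s t ∧ r ≤ t - s ∧ Ico s t ⊆ U

namespace MemLongIco

variable {U : Set ℝ} {r y c d : ℝ}

theorem mem (h : MemLongIco U r y) : y ∈ U := by
  obtain ⟨s, t, hy, -, hU⟩ := h
  exact hU hy

theorem inter_Ici (hc : c ∈ interior U → Ico c (c + r) ⊆ U) (h : MemLongIco U r y)
    (hcy : c ≤ y) : MemLongIco (U ∩ Ici c) r y := by
  obtain ⟨s, t, ⟨hsy, hyt⟩, hr, hU⟩ := h
  rcases le_or_gt c s with hcs | hsc
  · exact ⟨s, t, ⟨hsy, hyt⟩, hr, fun z hz => ⟨hU hz, hcs.trans hz.1⟩⟩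
  have hc_int : c ∈ interior U :=
    mem_interior_iff_mem_nhds.2 (mem_of_superset (Ico_mem_nhds hsc (hcy.trans_lt hyt)) hU)
  refine ⟨c, max t (c + r), ⟨hcy, lt_max_of_lt_left hyt⟩, by linarith [le_max_right t (c + r)],
    fun z hz => ⟨?_, hz.1⟩⟩
  rcases lt_max_iff.1 hz.2 with hzt | hzr
  · exact hU ⟨hsc.le.trans hz.1, hzt⟩
  · exact hc hc_int ⟨hz.1, hzr⟩

theorem inter_Iio (hd : d ∈ interior U → Ico (d - r) d ⊆ U) (h : MemLongIco U r y)
    (hyd : y < d) : MemLongIco (U ∩ Iio d) r y := by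
  obtain ⟨s, t, ⟨hsy, hyt⟩, hr, hU⟩ := h
  rcases le_or_gt t d with htd | hdt
  · exact ⟨s, t, ⟨hsy, hyt⟩, hr, fun z hz => ⟨hU hz, hz.2.trans_le htd⟩⟩
  have hd_int : d ∈ interior U :=
    mem_interior_iff_mem_nhds.2 (mem_of_superset (Ico_mem_nhds (hsy.trans_lt hyd) hdt) hU)
  refine ⟨min s (d - r), d, ⟨min_le_of_left_le hsy, hyd⟩, by linarith [min_le_right s (d - r)],
    fun z hz => ⟨?_, hz.2⟩⟩
  rcases min_le_iff.1 hz.1 with hsz | hrz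
  · exact hU ⟨hsz, hz.2.trans hdt⟩
  · exact hd hd_int ⟨hrz, hz.2⟩

theorem inter_Ico (hc : c ∈ interior U → Icc (c - r) (c + r) ⊆ U)
    (hd : d ∈ interior U → Icc (d - r) (d + r) ⊆ U) (hr : 0 ≤ r) (hrcd : r ≤ d - c)
    (h : MemLongIco U r y) (hy : y ∈ Ico c d) : MemLongIco (U ∩ Ico c d) r y := by
  have hright : MemLongIco (U ∩ Iio d) r y :=
    h.inter_Iio (fun hd' z hz => hd hd' ⟨hz.1, by linarith [hz.2]⟩) hy.2
  have hboth : MemLongIco (U ∩ Iio d ∩ Ici c) r y := by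
    refine hright.inter_Ici (fun hc' z hz => ⟨?_, ?_⟩) hy.1
    · exact hc (interior_mono inter_subset_left hc') ⟨by linarith [hz.1], hz.2.le⟩
    · exact mem_Iio.2 (by linarith [hz.2])
  rwa [inter_assoc, Iio_inter_Ici] at hboth

end MemLongIco

theorem eventually_memLongIco_of_mem_nhdsGE {U : Set ℝ} {x : ℝ} (hU : U ∈ 𝓝[≥] x) :
    ∀ᶠ r in 𝓝[>] (0 : ℝ), MemLongIco U r x := by
  obtain ⟨t, hxt, htU⟩ := mem_nhdsGE_iff_exists_Ico_subset.1 hU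
  filter_upwards [Ioo_mem_nhdsGT (sub_pos.2 hxt)] with r hr
  exact ⟨x, t, ⟨le_rfl, hxt⟩, hr.2.le, htU⟩

theorem eventually_Icc_subset_of_mem_interior (U : Set ℝ) (p : ℝ) :
    ∀ᶠ r in 𝓝[>] (0 : ℝ), p ∈ interior U → Icc (p - r) (p + r) ⊆ U := by
  by_cases hp : p ∈ interior U
  · filter_upwards [nhdsWithin_le_nhds
      (eventually_closedBall_subset (mem_interior_iff_mem_nhds.1 hp))] with r hr _
    rwa [← Real.closedBall_eq_Icc]
  · exact Eventually.of_forall fun r hp' => absurd hp' hp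

theorem eventually_memLongIco_inter_Ico (U : Set ℝ) (c d : ℝ) :
    ∀ᶠ r in 𝓝[>] (0 : ℝ), ∀ y ∈ Ico c d, MemLongIco U r y → MemLongIco (U ∩ Ico c d) r y := by
  rcases le_or_gt d c with hdc | hcd
  · simp [Ico_eq_empty_of_le hdc]
  filter_upwards [eventually_Icc_subset_of_mem_interior U c,
    eventually_Icc_subset_of_mem_interior U d, Ioo_mem_nhdsGT (sub_pos.2 hcd)]
    with r hc hd hr y hy h
  exact h.inter_Ico hc hd hr.1.le hr.2.le hy

theorem mem_periodicPts_of_piecewise_translation {ι : Type*} [Finite ι] {F : ℝ → ℝ} {U : Set ℝ}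
    {c d : ι → ℝ} (hbdd : Bornology.IsBounded U) (hmaps : MapsTo F U U) (hinj : InjOn F U)
    (hcover : U ⊆ ⋃ i, Ico (c i) (d i))
    (htrans : ∀ r > 0, ∃ δ > 0, ∀ i s t, r ≤ t - s → Ico s t ⊆ U ∩ Ico (c i) (d i) →
      ∃ m : ℤ, EqOn F (fun z => z + m * δ) (Ico s t))
    {x : ℝ} (hx : U ∈ 𝓝[≥] x) : x ∈ periodicPts F := by
  obtain ⟨r, hxr, hcut, hr⟩ := ((eventually_memLongIco_of_mem_nhdsGE hx).and
    ((eventually_all.2 fun i => eventually_memLongIco_inter_Ico U (c i) (d i)).and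
      self_mem_nhdsWithin)).exists
  obtain ⟨δ, hδ, hδF⟩ := htrans r hr
  let T : Set ℝ := {y | MemLongIco U r y} ∩ range fun m : ℤ => x + m * δ
  have hTU : T ⊆ U := fun y hy => hy.1.mem
  have hTfin : T.Finite := (finite_inter_range_add_intCast_mul hbdd hδ x).subset
    fun y hy => ⟨hTU hy, hy.2⟩
  have hTmaps : MapsTo F T T := by
    rintro _ ⟨hy, k, rfl⟩
    obtain ⟨i, hi⟩ := mem_iUnion.1 (hcover hy.mem)
    obtain ⟨s, t, hyst, hrst, hst⟩ := hcut i _ hi hy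
    obtain ⟨m, hm⟩ := hδF i s t hrst hst
    have himage : F '' Ico s t = Ico (s + m * δ) (t + m * δ) := by
      rw [hm.image_eq, image_add_const_Ico]
    refine ⟨⟨s + m * δ, t + m * δ, himage ▸ mem_image_of_mem F hyst, by linarith, ?_⟩, k + m, ?_⟩
    · rw [← himage]
      exact (hmaps.mono_left (hst.trans inter_subset_left)).image_subset
    · rw [hm hyst]
      push_cast
      ring
  exact mem_periodicPts_of_finite_of_injOn hTfin hTmaps (hinj.mono hTU) ⟨hxr, 0, by simp⟩

/-- The `n`-th interval of continuity of the von Neumann–Kakutani map, with `n` counted from `0`: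
this is the interval called `n + 1` in the definition of `vnk`. -/
def dyadicCell (n : ℕ) : Set ℝ :=
  Ico (1 - (2 : ℝ)⁻¹ ^ n) (1 - (2 : ℝ)⁻¹ ^ (n + 1))

theorem antitone_inv_two_pow : Antitone fun n : ℕ => (2 : ℝ)⁻¹ ^ n :=
  pow_right_anti₀ (by norm_num) (by norm_num)

theorem iUnion_dyadicCell : ⋃ n, dyadicCell n = Ico 0 1 := by
  refine Subset.antisymm (iUnion_subset fun n => ?_) fun z hz => ?_
  · refine Ico_subset_Ico (sub_nonneg.2 (pow_le_one₀ (by norm_num) (by norm_num))) ?_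
    exact sub_le_self 1 (by positivity)
  · obtain ⟨n, hn, hn'⟩ := exists_nat_pow_near_of_lt_one (sub_pos.2 hz.2)
      (sub_le_self 1 hz.1) (show (0 : ℝ) < 2⁻¹ by norm_num) (by norm_num)
    exact mem_iUnion.2 ⟨n, by linarith, by linarith⟩

theorem vnk_of_mem_dyadicCell {n : ℕ} {z : ℝ} (hz : z ∈ dyadicCell n) :
    vnk z = z - 1 + 3 * (2 : ℝ)⁻¹ ^ (n + 1) := by
  classical
  have h : ∃ k : ℕ, z < 1 - (2 : ℝ)⁻¹ ^ k := ⟨n + 1, hz.2⟩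
  have hfind : Nat.find h = n + 1 := by
    refine (Nat.find_eq_iff h).2 ⟨hz.2, fun k hk => not_lt.2 ?_⟩
    exact (sub_le_sub_left (antitone_inv_two_pow (Nat.lt_succ_iff.1 hk)) 1).trans hz.1
  rw [vnk, dif_pos h]
  convert rfl using 4
  exact hfind.symm

theorem mapsTo_vnk_dyadicCell (n : ℕ) :
    MapsTo vnk (dyadicCell n) (Ico ((2 : ℝ)⁻¹ ^ (n + 1)) ((2 : ℝ)⁻¹ ^ n)) := by
  intro z hz
  rw [vnk_of_mem_dyadicCell hz]
  obtain ⟨hz₁, hz₂⟩ := hz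
  rw [pow_succ] at hz₂ ⊢
  constructor <;> linarith

theorem mapsTo_vnk : MapsTo vnk (Ico 0 1) (Ico 0 1) := by
  rw [← iUnion_dyadicCell, mapsTo_iUnion, iUnion_dyadicCell]
  exact fun n => (mapsTo_vnk_dyadicCell n).mono_right
    (Ico_subset_Ico (by positivity) (pow_le_one₀ (by norm_num) (by norm_num)))

theorem injOn_vnk : InjOn vnk (Ico 0 1) := by
  rw [← iUnion_dyadicCell]
  refine injOn_iUnion_of_pairwise_disjoint antitone_inv_two_pow.pairwise_disjoint_on_Ico_succ
    mapsTo_vnk_dyadicCell fun n z hz w hw h => ?_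
  rw [vnk_of_mem_dyadicCell hz, vnk_of_mem_dyadicCell hw] at h
  linarith

theorem exists_Ico_subset_dyadicCell {s t : ℝ} (hst : s < t) (hI : Ico s t ⊆ Ico 0 1)
    (hne : ∀ k : ℕ, 1 - (2 : ℝ)⁻¹ ^ k ∉ Ico s t) : ∃ n, Ico s t ⊆ dyadicCell n := by
  obtain ⟨n, hn⟩ := mem_iUnion.1 (iUnion_dyadicCell ▸ hI (left_mem_Ico.2 hst))
  have ht : t ≤ 1 - (2 : ℝ)⁻¹ ^ (n + 1) := not_lt.1 fun ht => hne (n + 1) ⟨hn.2.le, ht⟩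
  exact ⟨n, Ico_subset_Ico hn.1 ht⟩

theorem sub_le_of_Ico_subset_dyadicCell {s t : ℝ} {n : ℕ} (hst : s < t)
    (h : Ico s t ⊆ dyadicCell n) : t - s ≤ (2 : ℝ)⁻¹ ^ (n + 1) := by
  obtain ⟨hs, ht⟩ := (Ico_subset_Ico_iff hst).1 h
  rw [pow_succ] at ht ⊢
  linarith

/-- The `i`-th of the `q` intervals of equal length that are exchanged by `rotPerm q π`. -/
def gridCell (q i : ℕ) : Set ℝ :=
  Ico ((i : ℝ) / q) (((i : ℝ) + 1) / q)

theorem pairwise_disjoint_gridCell (q : ℕ) : Pairwise (Disjoint on gridCell q) := by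
  have hmono : Monotone fun i : ℕ => (i : ℝ) / q := fun i j hij => by
    dsimp only
    gcongr
  have hdisj := hmono.pairwise_disjoint_on_Ico_succ
  simp only [Nat.succ_eq_succ, Nat.cast_succ] at hdisj
  exact hdisj

theorem iUnion_gridCell {q : ℕ} (hq : 0 < q) : ⋃ i : Fin q, gridCell q i = Ico 0 1 := by
  have hq' : (0 : ℝ) < q := Nat.cast_pos.2 hq
  refine Subset.antisymm (iUnion_subset fun i => ?_) fun x hx => ?_
  · refine Ico_subset_Ico (by positivity) ((div_le_one hq').2 ?_)
    exact_mod_cast i.2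
  · have hxq : 0 ≤ x * q := mul_nonneg hx.1 hq'.le
    have hlt : ⌊x * q⌋₊ < q := (Nat.floor_lt hxq).2 (mul_lt_of_lt_one_left hq' hx.2)
    exact mem_iUnion.2 ⟨⟨⌊x * q⌋₊, hlt⟩, (div_le_iff₀ hq').2 (Nat.floor_le hxq),
      (lt_div_iff₀ hq').2 (Nat.lt_floor_add_one _)⟩

section RotatedOdometer

variable {q : ℕ} (π : Equiv.Perm (Fin q))

theorem rotPerm_of_mem_gridCell {i : Fin q} {x : ℝ} (hx : x ∈ gridCell q i) :
    rotPerm q π x = x + ((π i : ℝ) - i) / q := by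
  have h : ∃ j : Fin q, x ∈ Ico (((j : ℕ) : ℝ) / q) ((((j : ℕ) : ℝ) + 1) / q) := ⟨i, hx⟩
  have hi : h.choose = i := by
    by_contra hne
    exact disjoint_left.1 (pairwise_disjoint_gridCell q (Fin.val_ne_of_ne hne)) h.choose_spec hx
  rw [rotPerm, dif_pos h, hi]

theorem mapsTo_rotPerm_gridCell (i : Fin q) :
    MapsTo (rotPerm q π) (gridCell q i) (gridCell q (π i)) := by
  intro x hx
  rw [rotPerm_of_mem_gridCell π hx]
  obtain ⟨hx₁, hx₂⟩ := hx
  rw [add_div] at hx₂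
  rw [gridCell, mem_Ico, sub_div, add_div]
  constructor <;> linarith

theorem mapsTo_rotPerm (hq : 0 < q) : MapsTo (rotPerm q π) (Ico 0 1) (Ico 0 1) := by
  rw [← iUnion_gridCell hq]
  exact mapsTo_iUnion.2 fun i =>
    (mapsTo_rotPerm_gridCell π i).mono_right (subset_iUnion (fun j : Fin q => gridCell q j) (π i))

theorem injOn_rotPerm (hq : 0 < q) : InjOn (rotPerm q π) (Ico 0 1) := by
  rw [← iUnion_gridCell hq]
  refine injOn_iUnion_of_pairwise_disjoint
    ((pairwise_disjoint_gridCell q).comp_of_injective (Fin.val_injective.comp π.injective))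
    (mapsTo_rotPerm_gridCell π) fun i x hx y hy h => ?_
  rw [rotPerm_of_mem_gridCell π hx, rotPerm_of_mem_gridCell π hy] at h
  exact add_right_cancel h

theorem mapsTo_rotOdo (hq : 0 < q) : MapsTo (rotOdo q π) (Ico 0 1) (Ico 0 1) :=
  mapsTo_vnk.comp (mapsTo_rotPerm π hq)

theorem injOn_rotOdo (hq : 0 < q) : InjOn (rotOdo q π) (Ico 0 1) :=
  injOn_vnk.comp (injOn_rotPerm π hq) (mapsTo_rotPerm π hq)

variable {π}

theorem rotPerm_ne_of_notMem_Dset {x : ℝ} (hx : x ∈ Ico (0 : ℝ) 1 \ Dset q π) (n : ℕ) :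
    rotPerm q π x ≠ 1 - (2 : ℝ)⁻¹ ^ n :=
  fun h => hx.2 ⟨hx.1, .inr ⟨0, hx.1, n, h⟩⟩

theorem mem_Dset_of_rotOdo_mem_Dset (hq : 0 < q) {y : ℝ} (hy : y ∈ Ico (0 : ℝ) 1)
    (h : rotOdo q π y ∈ Dset q π) : y ∈ Dset q π := by
  obtain ⟨-, ⟨d, hd, k, hk⟩ | ⟨k, hk⟩⟩ := h
  · rcases k with _ | k
    · obtain rfl : rotOdo q π y = d := hk
      exact ⟨hy, .inr ⟨1, hd⟩⟩
    · rw [iterate_succ_apply'] at hk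
      exact ⟨hy, .inl ⟨d, hd, k, injOn_rotOdo π hq hy ((mapsTo_rotOdo π hq).iterate k hd.1) hk⟩⟩
  · exact ⟨hy, .inr ⟨k + 1, hk⟩⟩

theorem mapsTo_rotOdo_diff_Dset (hq : 0 < q) :
    MapsTo (rotOdo q π) (Ico 0 1 \ Dset q π) (Ico 0 1 \ Dset q π) :=
  fun _ hy => ⟨mapsTo_rotOdo π hq hy.1, fun h => hy.2 (mem_Dset_of_rotOdo_mem_Dset hq hy.1 h)⟩

theorem exists_rotOdo_eqOn_translation (hq : 0 < q) {i : Fin q} {s t : ℝ} (hst : s < t)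
    (h : Ico s t ⊆ (Ico 0 1 \ Dset q π) ∩ gridCell q i) :
    ∃ n : ℕ, t - s ≤ (2 : ℝ)⁻¹ ^ n ∧
      EqOn (rotOdo q π) (fun z => z + (((π i : ℝ) - i) / q - 1 + 3 * (2 : ℝ)⁻¹ ^ n)) (Ico s t) := by
  set α : ℝ := ((π i : ℝ) - i) / q
  have hrot : EqOn (rotPerm q π) (fun z => z + α) (Ico s t) :=
    fun z hz => rotPerm_of_mem_gridCell π (h hz).2
  have himage : rotPerm q π '' Ico s t = Ico (s + α) (t + α) := by
    rw [hrot.image_eq, image_add_const_Ico]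
  have hst' : s + α < t + α := add_lt_add_left hst α
  obtain ⟨n, hn⟩ : ∃ n, Ico (s + α) (t + α) ⊆ dyadicCell n := by
    refine exists_Ico_subset_dyadicCell hst' ?_ fun k hk => ?_
    · rw [← himage]
      exact ((mapsTo_rotPerm π hq).mono_left fun z hz => (h hz).1.1).image_subset
    · obtain ⟨z, hz, hzk⟩ := himage.superset hk
      exact rotPerm_ne_of_notMem_Dset (h hz).1 k hzk
  refine ⟨n + 1, by linarith [sub_le_of_Ico_subset_dyadicCell hst' hn], fun z hz => ?_⟩
  have hzn : rotPerm q π z ∈ dyadicCell n := hn (himage ▸ mem_image_of_mem _ hz)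
  rw [rotOdo, vnk_of_mem_dyadicCell hzn, hrot hz]
  ring

theorem exists_intCast_mul_eq_div_add {n N : ℕ} (hq : 0 < q) (hn : n ≤ N) (a : ℤ) :
    ∃ m : ℤ, a / q - 1 + 3 * (2 : ℝ)⁻¹ ^ n = m * ((q : ℝ) * 2 ^ N)⁻¹ := by
  have hq' : (q : ℝ) ≠ 0 := Nat.cast_ne_zero.2 hq.ne'
  obtain ⟨l, rfl⟩ := Nat.exists_eq_add_of_le hn
  refine ⟨a * 2 ^ (n + l) - q * 2 ^ (n + l) + 3 * q * 2 ^ l, ?_⟩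
  push_cast
  rw [pow_add, inv_pow]
  field_simp

theorem exists_rotOdo_eqOn_lattice_translation (hq : 0 < q) {r : ℝ} (hr : 0 < r) :
    ∃ δ > 0, ∀ (i : Fin q) (s t : ℝ), r ≤ t - s →
      Ico s t ⊆ (Ico 0 1 \ Dset q π) ∩ gridCell q i →
        ∃ m : ℤ, EqOn (rotOdo q π) (fun z => z + m * δ) (Ico s t) := by
  obtain ⟨N, hN⟩ := exists_pow_lt_of_lt_one hr (show (2 : ℝ)⁻¹ < 1 by norm_num)
  refine ⟨((q : ℝ) * 2 ^ N)⁻¹, by positivity, fun i s t hrst h => ?_⟩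
  obtain ⟨n, hn, heq⟩ := exists_rotOdo_eqOn_translation hq (by linarith) h
  have hnN : n ≤ N := (antitone_inv_two_pow.reflect_lt (hN.trans_le (hrst.trans hn))).le
  obtain ⟨m, hm⟩ := exists_intCast_mul_eq_div_add hq hnN ((π i : ℤ) - i)
  push_cast at hm
  exact ⟨m, hm ▸ heq⟩

theorem mem_periodicPts_rotOdo_of_diff_Dset_mem_nhdsGE (hq : 0 < q) {x : ℝ}
    (hx : Ico 0 1 \ Dset q π ∈ 𝓝[≥] x) : x ∈ periodicPts (rotOdo q π) :=
  mem_periodicPts_of_piecewise_translation ((Metric.isBounded_Ico 0 1).subset sdiff_subset)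
    (mapsTo_rotOdo_diff_Dset hq) ((injOn_rotOdo π hq).mono sdiff_subset)
    (sdiff_subset.trans (iUnion_gridCell hq).superset)
    (fun _ hr => exists_rotOdo_eqOn_lattice_translation hq hr) hx

end RotatedOdometer

/-- `D` is dense in the set `I_np` of non-periodic points: every open interval
meeting `I_np` contains a point of `D`. -/
theorem Dset_dense_in_Inp (q : ℕ) (hq : 2 ≤ q) (π : Equiv.Perm (Fin q)) :
    ∀ u v : ℝ, u < v → (Set.Ioo u v ∩ Inp q π).Nonempty →
      (Set.Ioo u v ∩ Dset q π).Nonempty := by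
  rintro u v - ⟨x, ⟨hux, hxv⟩, hxI, hx_np⟩
  by_contra hempty
  have hU : Set.Ico 0 1 \ Dset q π ∈ 𝓝[≥] x := by
    filter_upwards [Ico_mem_nhdsGE (lt_min hxv hxI.2)] with z hz
    obtain ⟨hzv, hz1⟩ := lt_min_iff.1 hz.2
    exact ⟨⟨hxI.1.trans hz.1, hz1⟩, fun hzD => hempty ⟨z, ⟨hux.trans_le hz.1, hzv⟩, hzD⟩⟩
  obtain ⟨n, hn, hper⟩ :=
    mem_periodicPts.1 (mem_periodicPts_rotOdo_of_diff_Dset_mem_nhdsGE (by lia) hU)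
  exact hx_np ⟨hxI, n, hn, hper⟩
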